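/- For all integers m, a, b, c, x with 0 ≤ c ≤ a+b, 0 ≤ m ≤ min{a, b, c, a+b−c}, and max{c−b, 0} ≤ x ≤ min{a, c}: E_m(a,b,c,x) = E_m(a+b−c, c, b, b−c+x). -/

import Mathlib

/-!
The truncation in `hahnE` only drops vanishing terms, so `E_m(a,b,c,x)` is the full sum
`∑_{k+l=m} C(m,k) (x-c)_k (a-m+1)_k (k-b)_l (-x)_l` (`hahnE_eq_sum`). Expanding
`(v)_k = ∑_{i+r=k} (-1)^i C(k,i) (u-v)_i (u+i)_r` with `u = -b`, `v = a-m+1`, interchanging the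
sums and evaluating the inner one by the Chu–Vandermonde identity turns this into
`∑_{i+n=m} (-1)^i C(m,i) (x-c)_i (m-1-a-b)_i (i-b)_n (i-c)_n` (`sum_transform`), a terminating
`₃F₂` transformation. The substitution `(a,b,c,x) ↦ (a+b-c, c, b, b-c+x)` fixes `x-c` and `a+b` and
swaps `b` and `c`, so the last expression is invariant under it.
-/

open Finset

noncomputable section

/-- The Radon transform `d : M^{n-m,m} → M^{n-m+1,m-1}`, `(df)(B) = ∑_{x ∉ B} f(B ∪ {x})`. -/
def dR (n : ℕ) (f : Finset (Fin n) → ℂ) : Finset (Fin n) → ℂ :=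
  fun B => ∑ x ∈ Bᶜ, f (insert x B)

/-- The adjoint Radon transform `d* : M^{n-m,m} → M^{n-m-1,m+1}`. -/
def dS (n : ℕ) (f : Finset (Fin n) → ℂ) : Finset (Fin n) → ℂ :=
  fun B => ∑ x ∈ B, f (B.erase x)

/-- `R_q = (d*)^q / q!`, i.e. `(R_q f)(B) = ∑_{A ⊆ B, |A| = |B| - q} f(A)`. -/
def RT (n q : ℕ) (f : Finset (Fin n) → ℂ) : Finset (Fin n) → ℂ :=
  fun B => if q ≤ B.card then ∑ A ∈ B.powersetCard (B.card - q), f A else 0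

/-- Pochhammer symbol `(t)_p = t(t+1)⋯(t+p-1)`. -/
def poch (t : ℤ) (p : ℕ) : ℤ := ∏ i ∈ Finset.range p, (t + i)

/-- Dunkl-normalized Hahn polynomial value `E_m(a,b,c,x)`. -/
def hahnE (m : ℕ) (a b c x : ℤ) : ℤ :=
  ∑ j ∈ Finset.Icc (max 0 (x - c + m)) (min (m : ℤ) x),
    (-1) ^ j.toNat * (m.choose j.toNat : ℤ) * poch (b - m + 1) j.toNat * poch (-x) j.toNat *
      poch (a - m + 1) (m - j.toNat) * poch (x - c) (m - j.toNat)

/-- Inner product `⟨f, g⟩ = ∑ f(s) conj (g s)`. -/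
def ip (n : ℕ) (f g : Finset (Fin n) → ℂ) : ℂ :=
  ∑ s : Finset (Fin n), f s * (starRingEnd ℂ) (g s)

/-- Action of `S_n`: `(g · f)(ω) = f (g⁻¹ ω)`. -/
def permAct (n : ℕ) (g : Equiv.Perm (Fin n)) (f : Finset (Fin n) → ℂ) :
    Finset (Fin n) → ℂ :=
  fun s => f (s.image ⇑g⁻¹)

/-- The block `{o+1, …, o+a}` of the ground set `{1, …, n}` (0-indexed: positions `o ≤ x < o+a`). -/
def block (n o a : ℕ) : Finset (Fin n) :=
  Finset.filter (fun x => o ≤ (x : ℕ) ∧ (x : ℕ) < o + a) Finset.univ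

/-- Tensor product relative to the partition `A = {1,…,h}`, `B = {h+1,…,n}`:
`(φ ⊗ ψ)(Z) = φ(Z ∩ A) · ψ(Z ∩ B)`. -/
def tens (n h : ℕ) (φ ψ : Finset (Fin n) → ℂ) : Finset (Fin n) → ℂ :=
  fun Z => φ (Z ∩ block n 0 h) * ψ (Z ∩ block n h (n - h))

theorem poch_succ (t : ℤ) (n : ℕ) : poch t (n + 1) = poch t n * (t + n) := by
  simp [poch, Finset.prod_range_succ]

theorem poch_add (t : ℤ) (i j : ℕ) : poch t (i + j) = poch t i * poch (t + i) j := by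
  simp [poch, Finset.prod_range_add, add_assoc]

theorem poch_reflect (t : ℤ) (n : ℕ) : poch (1 - t - n) n = (-1) ^ n * poch t n := by
  unfold poch
  rw [← Finset.prod_range_reflect]
  have h : ((-1 : ℤ)) ^ n = ∏ _i ∈ Finset.range n, (-1 : ℤ) := by simp
  rw [h, ← Finset.prod_mul_distrib]
  refine Finset.prod_congr rfl fun i hi => ?_
  have hi' := Finset.mem_range.1 hi
  have : ((n - 1 - i : ℕ) : ℤ) = n - 1 - i := by omega
  rw [this]
  ring

theorem poch_neg_eq_zero {x : ℤ} (hx : 0 ≤ x) {j : ℕ} (h : x < j) : poch (-x) j = 0 := by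
  unfold poch
  refine Finset.prod_eq_zero (i := x.toNat) (Finset.mem_range.2 (by omega)) (by omega)

/-- The Chu–Vandermonde identity for rising factorials. -/
theorem poch_vandermonde (n : ℕ) (s p : ℤ) :
    ∑ q ∈ antidiagonal n, (n.choose q.1 : ℤ) * (poch s q.1 * poch p q.2) = poch (p + s) n := by
  induction n with
  | zero => simp [poch]
  | succ n ih =>
    rw [Finset.sum_antidiagonal_choose_succ_mul (fun i j => poch s i * poch p j) n,
      poch_succ, ← ih, ← Finset.sum_add_distrib, Finset.sum_mul]
    refine Finset.sum_congr rfl fun q hq => ?_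
    have h := HasAntidiagonal.mem_antidiagonal.1 hq
    have hc : n.choose q.2 = n.choose q.1 := by
      rw [← h]; exact Nat.choose_symm_add.symm
    have hn : (n : ℤ) = q.1 + q.2 := by exact_mod_cast h.symm
    rw [hc, poch_succ, poch_succ, hn]
    ring

/-- Expansion of `(v)_k` in the products `(u-v)_i (u+i)_{k-i}`: Chu–Vandermonde after reflecting
the second factor. -/
theorem poch_expand (k : ℕ) (u v : ℤ) :
    poch v k = ∑ q ∈ antidiagonal k,
      (-1) ^ q.1 * (k.choose q.1 : ℤ) * (poch (u - v) q.1 * poch (u + q.1) q.2) := by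
  have h := poch_vandermonde k (u - v) (1 - u - k)
  rw [show 1 - u - k + (u - v) = 1 - v - k by ring, poch_reflect] at h
  have h2 : poch v k = (-1) ^ k * ((-1) ^ k * poch v k) := by
    rw [← mul_assoc, ← mul_pow]; simp
  rw [h2, ← h, Finset.mul_sum]
  refine Finset.sum_congr rfl fun q hq => ?_
  have hk := HasAntidiagonal.mem_antidiagonal.1 hq
  have hk' : (k : ℤ) = q.1 + q.2 := by exact_mod_cast hk.symm
  have h3 : poch (1 - u - k) q.2 = (-1) ^ q.2 * poch (u + q.1) q.2 := by
    rw [← poch_reflect, hk']; congr 1; ring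
  have h4 : ((-1 : ℤ)) ^ k * (-1) ^ q.2 = (-1) ^ q.1 := by
    rw [← hk, pow_add, mul_assoc, ← mul_pow]; simp
  rw [h3, ← h4]
  ring

theorem sum_antidiagonal_assoc (m : ℕ) (f : ℕ → ℕ → ℕ → ℤ) :
    ∑ q ∈ antidiagonal m, ∑ r ∈ antidiagonal q.1, f r.1 r.2 q.2 =
      ∑ q ∈ antidiagonal m, ∑ r ∈ antidiagonal q.2, f q.1 r.1 r.2 := by
  rw [Finset.sum_sigma', Finset.sum_sigma']
  refine Finset.sum_nbij' (fun z => ⟨(z.2.1, z.2.2 + z.1.2), (z.2.2, z.1.2)⟩)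
    (fun z => ⟨(z.1.1 + z.2.1, z.2.2), (z.1.1, z.2.1)⟩) ?_ ?_ ?_ ?_ ?_
  · rintro ⟨⟨a, b⟩, ⟨c, d⟩⟩ h
    simp only [Finset.mem_sigma, HasAntidiagonal.mem_antidiagonal] at h ⊢
    exact ⟨by omega, trivial⟩
  · rintro ⟨⟨a, b⟩, ⟨c, d⟩⟩ h
    simp only [Finset.mem_sigma, HasAntidiagonal.mem_antidiagonal] at h ⊢
    exact ⟨by omega, trivial⟩
  · rintro ⟨⟨a, b⟩, ⟨c, d⟩⟩ h
    simp only [Finset.mem_sigma, HasAntidiagonal.mem_antidiagonal] at h ⊢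
    obtain ⟨-, rfl⟩ := h
    rfl
  · rintro ⟨⟨a, b⟩, ⟨c, d⟩⟩ h
    simp only [Finset.mem_sigma, HasAntidiagonal.mem_antidiagonal] at h ⊢
    obtain ⟨-, rfl⟩ := h
    rfl
  · rintro ⟨⟨a, b⟩, ⟨c, d⟩⟩ h
    rfl

/-- A terminating `₃F₂(1)` transformation in polynomial form. -/
theorem sum_transform (m : ℕ) (t u v p : ℤ) :
    ∑ q ∈ antidiagonal m, (m.choose q.1 : ℤ) *
        (poch t q.1 * poch v q.1 * poch (u + q.1) q.2 * poch p q.2) =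
      ∑ q ∈ antidiagonal m, (-1) ^ q.1 * (m.choose q.1 : ℤ) *
        (poch t q.1 * poch (u - v) q.1 * poch (u + q.1) q.2 * poch (p + t + q.1) q.2) := by
  have h1 : ∀ q ∈ antidiagonal m, (m.choose q.1 : ℤ) *
        (poch t q.1 * poch v q.1 * poch (u + q.1) q.2 * poch p q.2) =
      ∑ r ∈ antidiagonal q.1, (-1) ^ r.1 * (m.choose r.1 : ℤ) * ((r.2 + q.2).choose r.2 : ℤ) *
        (poch t r.1 * poch (t + r.1) r.2 * poch (u - v) r.1 * poch (u + r.1) (r.2 + q.2) *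
          poch p q.2) := by
    rintro ⟨k, l⟩ hq
    have hm : k + l = m := HasAntidiagonal.mem_antidiagonal.1 hq
    dsimp only
    rw [poch_expand k u v, Finset.mul_sum, Finset.sum_mul, Finset.sum_mul, Finset.mul_sum]
    refine Finset.sum_congr rfl ?_
    rintro ⟨i, r⟩ hr
    have hk : i + r = k := HasAntidiagonal.mem_antidiagonal.1 hr
    subst hk
    subst hm
    have hc : ((i + r + l).choose (i + r) : ℤ) * ((i + r).choose i : ℤ) =
        ((i + r + l).choose i : ℤ) * ((r + l).choose r : ℤ) := by
      have := Nat.choose_mul (n := i + r + l) (k := i + r) (s := i) (by omega)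
      rw [show i + r + l - i = r + l by omega, show i + r - i = r by omega] at this
      exact_mod_cast this
    dsimp only
    rw [poch_add t i r, poch_add (u + i) r l, show u + ((i + r : ℕ) : ℤ) = u + i + r by
      push_cast; ring]
    linear_combination (-1) ^ i * poch t i * poch (t + i) r * poch (u - v) i * poch (u + i) r *
      poch (u + i + r) l * poch p l * hc
  rw [Finset.sum_congr rfl h1, sum_antidiagonal_assoc m fun i r l =>
    (-1) ^ i * (m.choose i : ℤ) * ((r + l).choose r : ℤ) *
      (poch t i * poch (t + i) r * poch (u - v) i * poch (u + i) (r + l) * poch p l)]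
  refine Finset.sum_congr rfl ?_
  rintro ⟨i, n⟩ -
  dsimp only
  rw [add_assoc p, ← poch_vandermonde n (t + i) p, Finset.mul_sum, Finset.mul_sum]
  refine Finset.sum_congr rfl fun r hr => ?_
  rw [HasAntidiagonal.mem_antidiagonal.1 hr]
  ring

/-- For `0 ≤ x ≤ c` the bounds on the summation index in `hahnE` may be relaxed to `0 ≤ j ≤ m`;
here `j` is the second coordinate of the antidiagonal. -/
theorem hahnE_eq_sum (m : ℕ) (a b c x : ℤ) (hx : 0 ≤ x) (hxc : x ≤ c) :
    hahnE m a b c x = ∑ q ∈ antidiagonal m, (m.choose q.1 : ℤ) *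
        (poch (x - c) q.1 * poch (a - m + 1) q.1 * poch (-b + q.1) q.2 * poch (-x) q.2) := by
  unfold hahnE
  rw [Finset.sum_subset (s₂ := Finset.Icc (0 : ℤ) m)]
  · refine Finset.sum_nbij' (fun j => (m - j.toNat, j.toNat)) (fun q => (q.2 : ℤ)) ?_ ?_ ?_ ?_ ?_
    · intro j hj
      simp only [Finset.mem_Icc, HasAntidiagonal.mem_antidiagonal] at hj ⊢
      omega
    · rintro ⟨k, l⟩ hq
      simp only [Finset.mem_Icc, HasAntidiagonal.mem_antidiagonal] at hq ⊢
      omega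
    · intro j hj
      simp only [Finset.mem_Icc] at hj
      dsimp only
      omega
    · rintro ⟨k, l⟩ hq
      simp only [HasAntidiagonal.mem_antidiagonal] at hq
      ext <;> dsimp only <;> omega
    · intro j hj
      simp only [Finset.mem_Icc] at hj
      obtain ⟨l, rfl⟩ := Int.eq_ofNat_of_zero_le hj.1
      have hl : l ≤ m := by exact_mod_cast hj.2
      simp only [Int.toNat_natCast]
      have h := poch_reflect (-b + ((m - l : ℕ) : ℤ)) l
      rw [show 1 - (-b + ((m - l : ℕ) : ℤ)) - l = b - m + 1 by omega] at h
      have hs : ((-1 : ℤ)) ^ l * (-1) ^ l = 1 := by rw [← mul_pow]; simp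
      rw [h, Nat.choose_symm hl]
      linear_combination (m.choose l : ℤ) * poch (-b + ((m - l : ℕ) : ℤ)) l * poch (-x) l *
        poch (a - m + 1) (m - l) * poch (x - c) (m - l) * hs
  · intro j hj
    simp only [Finset.mem_Icc] at hj ⊢
    omega
  · intro j hj hj'
    simp only [Finset.mem_Icc] at hj hj'
    by_cases h : x < j
    · rw [poch_neg_eq_zero hx (j := j.toNat) (by omega)]
      ring
    · have h0 : poch (-(c - x)) (m - j.toNat) = 0 := poch_neg_eq_zero (by omega) (by omega)
      rw [show x - c = -(c - x) by ring, h0]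
      ring

/-- Regge symmetry (3.3): `E_m(a,b,c,x) = E_m(a+b-c, c, b, b-c+x)`. -/
theorem stmt18 (m : ℕ) (a b c x : ℤ) (hc0 : 0 ≤ c) (hcab : c ≤ a + b)
    (hma : (m : ℤ) ≤ a) (hmb : (m : ℤ) ≤ b) (hmc : (m : ℤ) ≤ c)
    (hmabc : (m : ℤ) ≤ a + b - c)
    (hx1 : c - b ≤ x) (hx2 : 0 ≤ x) (hx3 : x ≤ a) (hx4 : x ≤ c) :
    hahnE m a b c x = hahnE m (a + b - c) c b (b - c + x) := by
  rw [hahnE_eq_sum m a b c x hx2 hx4, hahnE_eq_sum m _ c b _ (by omega) (by omega),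
    sum_transform, sum_transform]
  refine Finset.sum_congr rfl fun q _ => ?_
  rw [show b - c + x - b = x - c by ring, show -x + (x - c) = -c by ring,
    show -(b - c + x) + (x - c) = -b by ring,
    show -c - (a + b - c - m + 1) = -b - (a - m + 1) by ring]
  ring
end
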